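/- Theorem 8: For the quaternary sequences u₆ = φ[s₁, s₃+1], u₈ = φ[s₃, s₄+1], u₁₄ = φ[s₁+1, s₃+1] of period p, the 4-adic complexity satisfies Φ₄(u_i) ≥ ⌊log₄((4^p − 1)/((1+2p)(1+6p)(1+8p)) + 1)⌋ for i = 6, 8, 14. -/

import Mathlib

open Finset

/-- The cyclotomic class `D_i` of order 4 modulo `p` with respect to the
primitive root `θ`: `{θ^(i+4j) mod p : 0 ≤ j < (p-1)/4}`. -/
def cycD (p θ i : ℕ) : Finset ℕ :=
  (Finset.range ((p - 1) / 4)).image fun j => θ ^ (i + 4 * j) % p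

/-- The binary sequence `s₁` with support set `D₀ ∪ D₁`. -/
def seqS1 (p θ : ℕ) (t : ℕ) : ℕ := if t ∈ cycD p θ 0 ∪ cycD p θ 1 then 1 else 0

/-- The binary sequence `s₂` with support set `D₀ ∪ D₃`. -/
def seqS2 (p θ : ℕ) (t : ℕ) : ℕ := if t ∈ cycD p θ 0 ∪ cycD p θ 3 then 1 else 0

/-- The binary sequence `s₃` with support set `D₁ ∪ D₂`. -/
def seqS3 (p θ : ℕ) (t : ℕ) : ℕ := if t ∈ cycD p θ 1 ∪ cycD p θ 2 then 1 else 0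

/-- The binary sequence `s₄` with support set `D₂ ∪ D₃`. -/
def seqS4 (p θ : ℕ) (t : ℕ) : ℕ := if t ∈ cycD p θ 2 ∪ cycD p θ 3 then 1 else 0

/-- The bitwise complement `s + 1` of a binary sequence. -/
def seqCompl (s : ℕ → ℕ) (t : ℕ) : ℕ := 1 - s t

/-- The inverse Gray mapping: `φ[0,0]=0, φ[0,1]=1, φ[1,1]=2, φ[1,0]=3`. -/
def gray (a b : ℕ) : ℕ := if a = 0 then b else 3 - b

/-- The quaternary sequence `φ[r,s] : t ↦ φ[r(t), s(t)]`. -/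
def graySeq (r s : ℕ → ℕ) (t : ℕ) : ℕ := gray (r t) (s t)

/-- The generating value `U(4) = Σ_{t=0}^{p-1} u(t)·4^t` of a quaternary
sequence `u` of period `p`. -/
def seqVal (p : ℕ) (u : ℕ → ℕ) : ℕ := ∑ t ∈ Finset.range p, u t * 4 ^ t

/-- The 4-adic complexity `Φ₄(u) = ⌊log₄((4^p − 1)/gcd(4^p − 1, U(4)) + 1)⌋`
of a quaternary sequence `u` of period `p`. -/
noncomputable def adicComplexity4 (p : ℕ) (u : ℕ → ℕ) : ℤ :=
  ⌊Real.logb 4 (((4 ^ p - 1 : ℕ) : ℝ) / ((Nat.gcd (4 ^ p - 1) (seqVal p u) : ℕ) : ℝ) + 1)⌋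


section helpers

lemma sum_zmod_range {M : Type*} [AddCommMonoid M] (p : ℕ) [NeZero p] (f : ℕ → M) :
    ∑ t : ZMod p, f t.val = ∑ t ∈ Finset.range p, f t := by
  refine Finset.sum_nbij' (fun t => t.val) (fun n => (n : ZMod p)) ?_ ?_ ?_ ?_ ?_
  · intro a _; simpa using ZMod.val_lt a
  · intro a _; simp
  · intro a _; simp
  · intro a ha; simp at ha; exact ZMod.val_cast_of_lt ha
  · intro a _; rfl

/-- additive autocorrelation -/
def conv2 {p : ℕ} [NeZero p] (e : ZMod p → ℤ) (s : ZMod p) : ℤ := ∑ t, e t * e (s - t)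

lemma conv2_sum {p : ℕ} [NeZero p] (e : ZMod p → ℤ) (he : ∑ t, e t = 0) :
    ∑ s, conv2 e s = 0 := by
  unfold conv2
  rw [Finset.sum_comm]
  apply Finset.sum_eq_zero
  intro t _
  have := (Equiv.subRight t).sum_comp e
  simp only [Equiv.subRight_apply] at this
  rw [← Finset.mul_sum, this, he, mul_zero]

lemma conv2_char {p : ℕ} [NeZero p] {R : Type*} [CommRing R] (ψ : AddChar (ZMod p) R)
    (e : ZMod p → ℤ) :
    (∑ t, (e t : R) * ψ t) ^ 2 = ∑ s, (conv2 e s : R) * ψ s := by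
  unfold conv2
  simp only [Int.cast_sum, Finset.sum_mul]
  rw [Finset.sum_comm, sq, Finset.sum_mul]
  refine Finset.sum_congr rfl fun t _ => ?_
  rw [Finset.mul_sum, ← (Equiv.subRight t).sum_comp]
  refine Finset.sum_congr rfl fun s _ => ?_
  have : ψ s = ψ t * ψ (s - t) := by rw [← AddChar.map_add_eq_mul]; congr 1; ring
  simp only [Equiv.subRight_apply, this]
  push_cast; ring

lemma conv2_mul {p : ℕ} [Fact p.Prime] (e : ZMod p → ℤ) (c : ZMod p) (hc : c ≠ 0) (σ : ℤ)
    (hσ : σ * σ = 1) (h : ∀ t, e (c * t) = σ * e t) (s : ZMod p) :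
    conv2 e (c * s) = conv2 e s := by
  unfold conv2
  rw [← Equiv.sum_comp (Equiv.mulLeft₀ c hc)]
  refine Finset.sum_congr rfl fun t _ => ?_
  simp only [Equiv.mulLeft₀_apply]
  rw [← mul_sub, h, h]
  linear_combination e t * e (s - t) * hσ

lemma sum_anti {p : ℕ} [Fact p.Prime] (e : ZMod p → ℤ) (c : ZMod p) (hc : c ≠ 0)
    (h : ∀ t, e (c * t) = - e t) : ∑ t, e t = 0 := by
  have := Equiv.sum_comp (Equiv.mulLeft₀ c hc) e
  simp only [Equiv.mulLeft₀_apply, h, Finset.sum_neg_distrib] at this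
  linarith

lemma sum_ne {p : ℕ} [Fact p.Prime] : ∑ t : ZMod p, (if t = 0 then (0:ℤ) else 1) = p - 1 := by
  have h : ∀ t : ZMod p, (if t = 0 then (0:ℤ) else 1) = 1 - (if t = 0 then 1 else 0) := by
    intro t; split_ifs <;> simp
  simp only [h, Finset.sum_sub_distrib]
  simp [ZMod.card]

lemma conv2_zero {p : ℕ} [Fact p.Prime] (e : ZMod p → ℤ) (σ : ℤ)
    (h0 : e 0 = 0) (h1 : ∀ t, t ≠ 0 → e t * e t = 1) (h : ∀ t, e (-t) = σ * e t) :
    conv2 e 0 = σ * (p - 1) := by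
  unfold conv2
  rw [← sum_ne, Finset.mul_sum]
  refine Finset.sum_congr rfl fun t _ => ?_
  rw [zero_sub, h]
  split_ifs with ht
  · simp [ht, h0]
  · linear_combination σ * h1 t ht

lemma conv2_bound {p : ℕ} [NeZero p] (e : ZMod p → ℤ) (h : ∀ t, |e t| ≤ 1) (s : ZMod p) :
    |conv2 e s| ≤ p := by
  unfold conv2
  refine (Finset.abs_sum_le_sum_abs _ _).trans ?_
  calc _ ≤ ∑ t : ZMod p, (1:ℤ) := by
        refine Finset.sum_le_sum fun t _ => ?_
        rw [abs_mul]
        exact mul_le_one₀ (h _) (abs_nonneg _) (h _)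
    _ = p := by simp [ZMod.card]

/-- Main algebraic lemma. -/
lemma main_alg {p : ℕ} [Fact p.Prime] (hp2 : 2 < p) (θ : ZMod p) (hθ0 : θ ≠ 0)
    (hgen : ∀ t : ZMod p, t ≠ 0 → ∃ k : ℕ, t = θ ^ k)
    (e χ : ZMod p → ℤ) (he0 : e 0 = 0) (hχ0 : χ 0 = 0)
    (he1 : ∀ t, t ≠ 0 → e t * e t = 1) (hχ1 : ∀ t, t ≠ 0 → χ t * χ t = 1)
    (hone : χ 1 = 1)
    (heθ : ∀ t, e (θ ^ 2 * t) = - e t) (hχθ : ∀ t, χ (θ * t) = - χ t)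
    (heneg : ∀ t, e (-t) = - e t) (hχneg : ∀ t, χ (-t) = χ t) :
    ∃ b : ℤ, |b| ≤ p + 1 ∧ ∀ (R : Type) [CommRing R] (ψ : AddChar (ZMod p) R),
      (∑ t, ψ t = 0) →
      (∑ t, (e t : R) * ψ t) ^ 2 = - p + b * (∑ t, (χ t : R) * ψ t) ∧
      (∑ t, (χ t : R) * ψ t) ^ 2 = p := by
  have hχk : ∀ k : ℕ, χ (θ ^ k) = (-1) ^ k := by
    intro k
    induction k with
    | zero => simpa using hone
    | succ k ih => rw [pow_succ', hχθ, ih]; ring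
  have hχs : ∑ t, χ t = 0 := sum_anti χ θ hθ0 hχθ
  have hes : ∑ t, e t = 0 := sum_anti e (θ ^ 2) (pow_ne_zero _ hθ0) heθ
  have hp1 : (p : ℤ) - 1 ≠ 0 := by omega
  -- convolution of χ
  have hcχ : ∀ s, conv2 χ s = p * (if s = 0 then 1 else 0) - 1 := by
    have hz : conv2 χ 0 = 1 * (p - 1) := conv2_zero χ 1 hχ0 hχ1 (by simpa using hχneg)
    have hk : ∀ k : ℕ, conv2 χ (θ ^ k) = conv2 χ 1 := by
      intro k
      induction k with
      | zero => simp
      | succ k ih =>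
        rw [pow_succ', conv2_mul χ θ hθ0 (-1) (by norm_num) (by simpa using hχθ), ih]
    have hall : ∀ s, conv2 χ s = (if s = 0 then 0 else 1) * conv2 χ 1
        + (if s = 0 then 1 else 0) * (p - 1) := by
      intro s
      split_ifs with hs
      · rw [hs, hz]; ring
      · obtain ⟨k, rfl⟩ := hgen s hs
        rw [hk]; ring
    have hsum := conv2_sum χ hχs
    rw [Finset.sum_congr rfl (fun s _ => hall s), Finset.sum_add_distrib, ← Finset.sum_mul,
      sum_ne, ← Finset.sum_mul] at hsum
    simp only [Finset.sum_ite_eq', Finset.mem_univ, if_true] at hsum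
    have h1 : conv2 χ 1 = -1 := by
      have : ((p:ℤ) - 1) * (conv2 χ 1 + 1) = 0 := by linarith
      rcases mul_eq_zero.1 this with h | h
      · exact absurd h hp1
      · linarith
    intro s
    rw [hall, h1]; split_ifs <;> ring
  have hce : ∀ s, conv2 e s = 1 + (conv2 e 1 - 1) * χ s - p * (if s = 0 then 1 else 0) := by
    have hz : conv2 e 0 = (-1) * (p - 1) := conv2_zero e (-1) he0 he1 (by simpa using heneg)
    have hst : ∀ s, conv2 e (θ ^ 2 * s) = conv2 e s :=
      conv2_mul e (θ ^ 2) (pow_ne_zero _ hθ0) (-1) (by norm_num) (by simpa using heθ)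
    have hk : ∀ k : ℕ, 2 * conv2 e (θ ^ k) = (1 + (-1) ^ k) * conv2 e 1
        + (1 - (-1) ^ k) * conv2 e θ := by
      intro k
      induction k using Nat.twoStepInduction with
      | zero => simp; try ring
      | one => simp; try ring
      | more k ih _ =>
        rw [show θ ^ (k + 2) = θ ^ 2 * θ ^ k by ring, hst, ih]; ring
    have hall : ∀ s, 2 * conv2 e s = (if s = 0 then 0 else 1) * (conv2 e 1 + conv2 e θ)
        + χ s * (conv2 e 1 - conv2 e θ)
        + (if s = 0 then 1 else 0) * (-2 * (p - 1)) := by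
      intro s
      split_ifs with hs
      · rw [hs, hz, hχ0]; ring
      · obtain ⟨k, rfl⟩ := hgen s hs
        rw [hk, hχk]; ring
    have hsum := conv2_sum e hes
    have hsum2 : ∑ s, 2 * conv2 e s = 0 := by rw [← Finset.mul_sum, hsum, mul_zero]
    rw [Finset.sum_congr rfl (fun s _ => hall s), Finset.sum_add_distrib,
      Finset.sum_add_distrib, ← Finset.sum_mul,
      sum_ne, ← Finset.sum_mul, ← Finset.sum_mul, hχs] at hsum2
    simp only [Finset.sum_ite_eq', Finset.mem_univ, if_true] at hsum2
    have h1 : conv2 e θ = 2 - conv2 e 1 := by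
      have : ((p:ℤ) - 1) * (conv2 e 1 + conv2 e θ - 2) = 0 := by linarith
      rcases mul_eq_zero.1 this with h | h
      · exact absurd h hp1
      · linarith
    intro s
    have := hall s
    rw [h1] at this
    have h2 : 2 * conv2 e s = 2 * (1 + (conv2 e 1 - 1) * χ s - p * (if s = 0 then 1 else 0)) := by
      rw [this]; split_ifs with hs
      · ring
      · ring
    linarith
  have habs : ∀ t, |e t| ≤ 1 := by
    intro t
    by_cases ht : t = 0
    · simp [ht, he0]
    · have := he1 t ht
      rw [abs_le_one_iff_mul_self_le_one]; omega
  refine ⟨conv2 e 1 - 1, ?_, ?_⟩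
  · have := conv2_bound e habs 1
    rw [abs_le] at this ⊢
    constructor <;> linarith [this.1, this.2]
  · intro R _ ψ hψ
    constructor
    · rw [conv2_char]
      have hterm : ∀ s, (conv2 e s : R) * ψ s = ψ s + ((conv2 e 1 - 1 : ℤ) : R) * ((χ s : R) * ψ s)
          - p * (if s = 0 then ψ s else 0) := by
        intro s
        rw [hce s]
        push_cast
        split_ifs <;> ring
      rw [Finset.sum_congr rfl (fun s _ => hterm s), Finset.sum_sub_distrib,
        Finset.sum_add_distrib, ← Finset.mul_sum, ← Finset.mul_sum, hψ, Finset.sum_ite_eq',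
        if_pos (Finset.mem_univ _), AddChar.map_zero_eq_one]
      ring
    · rw [conv2_char]
      simp only [hcχ]
      push_cast
      simp only [add_mul, sub_mul, Finset.sum_add_distrib, Finset.sum_sub_distrib, one_mul, hψ,
        mul_assoc, ← Finset.mul_sum, ite_mul, zero_mul, Finset.sum_ite_eq', Finset.mem_univ,
        if_true, AddChar.map_zero_eq_one]
      simp

/-- The bound on the gcd. -/
lemma gcd_bound {p : ℕ} [Fact p.Prime] (hp2 : 2 < p) (θ : ZMod p) (hθ0 : θ ≠ 0)
    (hgen : ∀ t : ZMod p, t ≠ 0 → ∃ k : ℕ, t = θ ^ k)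
    (e χ : ZMod p → ℤ) (he0 : e 0 = 0) (hχ0 : χ 0 = 0)
    (he1 : ∀ t, t ≠ 0 → e t * e t = 1) (hχ1 : ∀ t, t ≠ 0 → χ t * χ t = 1)
    (hone : χ 1 = 1)
    (heθ : ∀ t, e (θ ^ 2 * t) = - e t) (hχθ : ∀ t, χ (θ * t) = - χ t)
    (heneg : ∀ t, e (-t) = - e t) (hχneg : ∀ t, χ (-t) = χ t)
    (σ τ : ℤ) (hσ : σ = 1 ∨ σ = -1) (hτ : τ = 1 ∨ τ = -1) (u : ℕ → ℕ)
    (hu : ∀ t : ZMod p, 2 * (u t.val : ℤ) = 3 + 2 * e t + σ * χ t + τ * (if t = 0 then 1 else 0)) :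
    Nat.gcd (4 ^ p - 1) (seqVal p u) ≤ (1 + 2 * p) * (1 + 6 * p) * (1 + 8 * p) := by
  obtain ⟨b, hb, hmain⟩ := main_alg hp2 θ hθ0 hgen e χ he0 hχ0 he1 hχ1 hone heθ hχθ heneg hχneg
  have hχs : ∑ t, χ t = 0 := sum_anti χ θ hθ0 hχθ
  have hes : ∑ t, e t = 0 := sum_anti e (θ ^ 2) (pow_ne_zero _ hθ0) heθ
  set g := Nat.gcd (4 ^ p - 1) (seqVal p u) with hg
  -- 3 does not divide
  have hsu : 2 * ∑ t ∈ Finset.range p, (u t : ℤ) = 3 * p + τ := by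
    rw [← sum_zmod_range p (fun t => (u t : ℤ)), Finset.mul_sum,
      Finset.sum_congr rfl (fun t _ => hu t)]
    simp only [Finset.sum_add_distrib, ← Finset.mul_sum, hes, hχs]
    simp [ZMod.card]; ring
  have h3 : Nat.Coprime 3 g := by
    rw [Nat.Prime.coprime_iff_not_dvd Nat.prime_three]
    intro h
    have h3' : 3 ∣ seqVal p u := h.trans (Nat.gcd_dvd_right _ _)
    have h4 : ((seqVal p u : ℕ) : ZMod 3) = 0 := (ZMod.natCast_eq_zero_iff _ _).2 h3'
    unfold seqVal at h4
    push_cast at h4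
    have h5 : (4 : ZMod 3) = 1 := by decide
    simp only [h5, one_pow, mul_one] at h4
    have h6 := congrArg (fun n : ℤ => (n : ZMod 3)) hsu
    push_cast at h6
    have h7 : (3 : ZMod 3) = 0 := by decide
    rw [h4, h7] at h6
    rcases hτ with h | h <;> rw [h] at h6 <;> revert h6 <;> simp
  have h4g : (4 : ZMod g) ^ p = 1 := by
    have h1 : ((4 ^ p - 1 : ℕ) : ZMod g) = 0 :=
      (ZMod.natCast_eq_zero_iff _ _).2 (Nat.gcd_dvd_left _ _)
    rw [Nat.cast_sub (Nat.one_le_pow _ _ (by norm_num))] at h1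
    push_cast at h1
    exact sub_eq_zero.1 h1
  let ψ : AddChar (ZMod p) (ZMod g) := AddChar.zmodChar p h4g
  have hψv : ∀ t, ψ t = 4 ^ t.val := fun t => AddChar.zmodChar_apply h4g t
  have hψ : ∑ t, ψ t = 0 := by
    simp only [hψv]
    rw [sum_zmod_range p (fun t => (4 : ZMod g) ^ t)]
    have := geom_sum_mul (4 : ZMod g) p
    rw [h4g, sub_self] at this
    have hu3 : IsUnit ((3:ℕ) : ZMod g) := (ZMod.isUnit_iff_coprime 3 g).2 h3
    have h43 : (4 : ZMod g) - 1 = ((3:ℕ) : ZMod g) := by push_cast; norm_num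
    rw [h43] at this
    exact (hu3.mul_left_eq_zero).1 this
  have hU : 2 * ∑ t : ZMod p, (u t.val : ZMod g) * ψ t = 0 := by
    simp only [hψv]
    rw [sum_zmod_range p (fun t => (u t : ZMod g) * 4 ^ t)]
    have h1 : ((seqVal p u : ℕ) : ZMod g) = 0 :=
      (ZMod.natCast_eq_zero_iff _ _).2 (Nat.gcd_dvd_right _ _)
    unfold seqVal at h1
    push_cast at h1
    rw [h1, mul_zero]
  obtain ⟨hE, hC⟩ := hmain (ZMod g) ψ hψ
  set E := ∑ t, (e t : ZMod g) * ψ t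
  set C := ∑ t, (χ t : ZMod g) * ψ t
  have hlin : 2 * E + σ * C + τ = 0 := by
    have hu' : ∀ t : ZMod p, 2 * ((u t.val : ZMod g) * ψ t) = 3 * ψ t + 2 * ((e t : ZMod g) * ψ t)
        + σ * ((χ t : ZMod g) * ψ t) + τ * (if t = 0 then ψ t else 0) := by
      intro t
      have := congrArg (fun n : ℤ => (n : ZMod g)) (hu t)
      push_cast at this
      rw [← mul_assoc, this]
      split_ifs <;> ring
    rw [Finset.mul_sum, Finset.sum_congr rfl (fun t _ => hu' t)] at hU
    simp only [Finset.sum_add_distrib, ← Finset.mul_sum, hψ, Finset.sum_ite_eq', Finset.mem_univ,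
        if_true, AddChar.map_zero_eq_one] at hU
    linear_combination hU
  have hσ2 : (σ : ZMod g) * σ = 1 := by rcases hσ with h | h <;> simp [h]
  have hτ2 : (τ : ZMod g) * τ = 1 := by rcases hτ with h | h <;> simp [h]
  have hlin2 : (4 * b - 2 * σ * τ) * C = 1 + 5 * (p : ZMod g) := by
    have h2E : 2 * E = - (σ * C + τ) := by linear_combination hlin
    have hsq : (2 * E) ^ 2 = (σ * C + τ) ^ 2 := by rw [h2E]; ring
    linear_combination hsq - 4 * hE + hσ2 * C ^ 2 + hC + hτ2
  have hN : (((1 + 5 * p) ^ 2 - p * (4 * b - 2 * σ * τ) ^ 2 : ℤ) : ZMod g) = 0 := by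
    push_cast
    rw [← hlin2, ← hC]; ring
  rw [ZMod.intCast_zmod_eq_zero_iff_dvd] at hN
  have hN0 : ((1 + 5 * p) ^ 2 - p * (4 * b - 2 * σ * τ) ^ 2 : ℤ) ≠ 0 := by
    intro h
    have hpr : Prime (p : ℤ) := Nat.prime_iff_prime_int.1 Fact.out
    have h1 : (p : ℤ) ∣ (1 + 5 * p) ^ 2 := ⟨(4 * b - 2 * σ * τ) ^ 2, by linarith⟩
    have h2 := hpr.dvd_of_dvd_pow h1
    have h3 : (p : ℤ) ∣ 1 := (Int.dvd_add_left (Dvd.intro_left _ rfl)).1 h2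
    exact hpr.not_isUnit (isUnit_of_dvd_one h3)
  have hle := Int.le_of_dvd (abs_pos.2 hN0) ((dvd_abs _ _).2 hN)
  have hkb : |4 * b - 2 * σ * τ| ≤ 4 * p + 6 := by
    rw [abs_le] at hb ⊢
    rcases hσ with h | h <;> rcases hτ with h' | h' <;> rw [h, h'] <;> constructor <;>
      linarith [hb.1, hb.2]
  have hk2 : (4 * b - 2 * σ * τ) ^ 2 ≤ (4 * (p:ℤ) + 6) ^ 2 := sq_le_sq' (abs_le.1 hkb).1 (abs_le.1 hkb).2
  have hp0 : (3 : ℤ) ≤ p := by exact_mod_cast hp2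
  have hfin : (g : ℤ) ≤ (1 + 2 * p) * (1 + 6 * p) * (1 + 8 * p) := by
    refine hle.trans ?_
    have hm := mul_le_mul_of_nonneg_left hk2 (by linarith : (0:ℤ) ≤ p)
    have hm0 : 0 ≤ (p : ℤ) * (4 * b - 2 * σ * τ) ^ 2 := by positivity
    have e2 : 3 * (p:ℤ) ≤ p ^ 2 := by nlinarith
    have e3 : 3 * (p:ℤ) ^ 2 ≤ p ^ 3 := by nlinarith
    rw [abs_le]
    constructor <;> nlinarith
  exact_mod_cast hfin

lemma floor_bound (p : ℕ) (u : ℕ → ℕ) (hp : 0 < p)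
    (h : Nat.gcd (4 ^ p - 1) (seqVal p u) ≤ (1 + 2 * p) * (1 + 6 * p) * (1 + 8 * p)) :
    ⌊Real.logb 4 (((4 ^ p - 1 : ℕ) : ℝ) / (((1 + 2 * (p : ℝ)) * (1 + 6 * (p : ℝ)) * (1 + 8 * (p : ℝ)))) + 1)⌋ ≤
      adicComplexity4 p u := by
  unfold adicComplexity4
  apply Int.floor_le_floor
  have hpos : 0 < 4 ^ p - 1 := Nat.sub_pos_of_lt (Nat.one_lt_pow hp.ne' (by norm_num))
  have hg : 0 < Nat.gcd (4 ^ p - 1) (seqVal p u) := Nat.gcd_pos_of_pos_left _ hpos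
  have h' : ((Nat.gcd (4 ^ p - 1) (seqVal p u) : ℕ) : ℝ) ≤
      (1 + 2 * (p : ℝ)) * (1 + 6 * (p : ℝ)) * (1 + 8 * (p : ℝ)) := by exact_mod_cast h
  have hg' : (0:ℝ) < ((Nat.gcd (4 ^ p - 1) (seqVal p u) : ℕ) : ℝ) := by exact_mod_cast hg
  apply Real.logb_le_logb_of_le (by norm_num)
  · positivity
  · gcongr

/-- function on ZMod p given by values on the cyclotomic classes -/
def clsF (p θ : ℕ) (c : ℕ → ℤ) (t : ZMod p) : ℤ :=
  if t.val ∈ cycD p θ 0 then c 0 else if t.val ∈ cycD p θ 1 then c 1 else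
  if t.val ∈ cycD p θ 2 then c 2 else if t.val ∈ cycD p θ 3 then c 3 else 0

lemma mem_cycD {p θ : ℕ} [Fact p.Prime] (h4 : p % 4 = 1)
    (hθ : IsPrimitiveRoot (θ : ZMod p) (p - 1)) (i k : ℕ) (hi : i < 4) :
    ((θ : ZMod p) ^ k).val ∈ cycD p θ i ↔ k % 4 = i := by
  have hp : 1 < p := (Fact.out : p.Prime).one_lt
  have hmod : ∀ j : ℕ, θ ^ j % p = ((θ : ZMod p) ^ j).val := by
    intro j; rw [← Nat.cast_pow, ZMod.val_natCast]
  have hd : (p - 1) % 4 = 0 := by omega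
  unfold cycD
  simp only [Finset.mem_image, Finset.mem_range, hmod]
  constructor
  · rintro ⟨j, _, h⟩
    have h := ZMod.val_injective p h
    rw [pow_eq_pow_mod (i + 4 * j) hθ.pow_eq_one, pow_eq_pow_mod k hθ.pow_eq_one] at h
    have h := hθ.pow_inj (Nat.mod_lt _ (by omega)) (Nat.mod_lt _ (by omega)) h
    have h2 : (i + 4 * j) ≡ k [MOD 4] := Nat.ModEq.of_dvd (Nat.dvd_of_mod_eq_zero hd) h
    unfold Nat.ModEq at h2
    omega
  · intro h
    have hlt : k % (p - 1) < p - 1 := Nat.mod_lt _ (by omega)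
    have h2 : k % (p - 1) % 4 = k % 4 := Nat.mod_mod_of_dvd _ (Nat.dvd_of_mod_eq_zero hd)
    refine ⟨k % (p - 1) / 4, by omega, ?_⟩
    have : i + 4 * (k % (p - 1) / 4) = k % (p - 1) := by omega
    rw [this]
    rw [← pow_eq_pow_mod k hθ.pow_eq_one]

lemma zero_mem_cycD {p θ : ℕ} [Fact p.Prime] (hθ0 : (θ : ZMod p) ≠ 0) (i : ℕ) :
    0 ∉ cycD p θ i := by
  unfold cycD
  simp only [Finset.mem_image, not_exists, not_and]
  intro j _ h
  have : ((θ ^ (i + 4 * j) : ℕ) : ZMod p) = 0 :=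
    (ZMod.natCast_eq_zero_iff _ _).2 (Nat.dvd_of_mod_eq_zero h)
  rw [Nat.cast_pow] at this
  exact pow_ne_zero _ hθ0 this

end helpers

theorem theorem8
    (p : ℕ) (hp : p.Prime) (hp8 : p % 8 = 5)
    (x y : ℤ) (hx : x % 4 = 1) (hxy : (p : ℤ) = x ^ 2 + 4 * y ^ 2)
    (θ : ℕ) (hθ : IsPrimitiveRoot (θ : ZMod p) (p - 1))
    (hy : 16 * (((cycD p θ 0).filter (fun a => (a + 1) % p ∈ cycD p θ 1)).card : ℤ)
        = (p : ℤ) + 1 + 2 * x - 8 * y)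
    :
    ⌊Real.logb 4 (((4 ^ p - 1 : ℕ) : ℝ) / (((1 + 2 * (p : ℝ)) * (1 + 6 * (p : ℝ)) * (1 + 8 * (p : ℝ)))) + 1)⌋ ≤
      adicComplexity4 p (graySeq (seqS1 p θ) (seqCompl (seqS3 p θ))) ∧
    ⌊Real.logb 4 (((4 ^ p - 1 : ℕ) : ℝ) / (((1 + 2 * (p : ℝ)) * (1 + 6 * (p : ℝ)) * (1 + 8 * (p : ℝ)))) + 1)⌋ ≤
      adicComplexity4 p (graySeq (seqS3 p θ) (seqCompl (seqS4 p θ))) ∧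
    ⌊Real.logb 4 (((4 ^ p - 1 : ℕ) : ℝ) / (((1 + 2 * (p : ℝ)) * (1 + 6 * (p : ℝ)) * (1 + 8 * (p : ℝ)))) + 1)⌋ ≤
      adicComplexity4 p (graySeq (seqCompl (seqS1 p θ)) (seqCompl (seqS3 p θ))) := by
  have : Fact p.Prime := ⟨hp⟩
  have hp5 : 5 ≤ p := by omega
  have h4 : p % 4 = 1 := by omega
  have hθ0 : (θ : ZMod p) ≠ 0 := hθ.ne_zero (by omega)
  have hgen : ∀ t : ZMod p, t ≠ 0 → ∃ k : ℕ, t = (θ : ZMod p) ^ k := by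
    intro t ht
    have : NeZero (p - 1) := ⟨by omega⟩
    obtain ⟨i, _, hi⟩ := hθ.eq_pow_of_pow_eq_one (ZMod.pow_card_sub_one_eq_one ht)
    exact ⟨i, hi.symm⟩
  have hneg : (-1 : ZMod p) = (θ : ZMod p) ^ ((p - 1) / 2) := by
    have h1 : ((θ : ZMod p) ^ ((p - 1) / 2)) * ((θ : ZMod p) ^ ((p - 1) / 2)) = 1 := by
      rw [← pow_add, show (p - 1) / 2 + (p - 1) / 2 = p - 1 by omega, hθ.pow_eq_one]
    rcases mul_self_eq_one_iff.1 h1 with h | h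
    · exact absurd h (hθ.pow_ne_one_of_pos_of_lt (by omega) (by omega))
    · exact h.symm
  have hm : ∀ i k : ℕ, i < 4 → (((θ : ZMod p) ^ k).val ∈ cycD p θ i ↔ k % 4 = i) :=
    fun i k hi => mem_cycD h4 hθ i k hi
  have hz : ∀ i, 0 ∉ cycD p θ i := zero_mem_cycD hθ0
  have hF0 : ∀ c, clsF p θ c 0 = 0 := by
    intro c; simp [clsF, hz]
  have hFk : ∀ c k, clsF p θ c ((θ : ZMod p) ^ k) = c (k % 4) := by
    intro c k
    have hk : k % 4 = 0 ∨ k % 4 = 1 ∨ k % 4 = 2 ∨ k % 4 = 3 := by omega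
    unfold clsF
    simp only [hm 0 k (by norm_num), hm 1 k (by norm_num), hm 2 k (by norm_num), hm 3 k (by norm_num)]
    rcases hk with h | h | h | h <;> simp [h]
  -- shifting
  have hFs : ∀ (c : ℕ → ℤ) (σ : ℤ) (j : ℕ), (∀ k, c ((j + k) % 4) = σ * c (k % 4)) →
      ∀ t, clsF p θ c ((θ : ZMod p) ^ j * t) = σ * clsF p θ c t := by
    intro c σ j hc t
    by_cases ht : t = 0
    · simp [ht, hF0]
    · obtain ⟨k, rfl⟩ := hgen t ht
      rw [← pow_add, hFk, hFk, hc]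
  have hF1 : ∀ (c : ℕ → ℤ), (∀ k, k < 4 → c k * c k = 1) →
      ∀ t, t ≠ 0 → clsF p θ c t * clsF p θ c t = 1 := by
    intro c hc t ht
    obtain ⟨k, rfl⟩ := hgen t ht
    rw [hFk]; exact hc _ (Nat.mod_lt _ (by norm_num))
  have h24 : ∀ k, ((p - 1) / 2 + k) % 4 = (2 + k) % 4 := by intro k; omega
  let cχ : ℕ → ℤ := fun k => if k = 0 ∨ k = 2 then 1 else -1
  have key : ∀ (c : ℕ → ℤ) (σ τ : ℤ) (u : ℕ → ℕ), (∀ k, k < 4 → c k * c k = 1) →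
      c 2 = - c 0 → c 3 = - c 1 → (σ = 1 ∨ σ = -1) → (τ = 1 ∨ τ = -1) →
      (2 * (u 0 : ℤ) = 3 + τ) →
      (∀ k, 2 * (u ((θ : ZMod p) ^ k).val : ℤ) = 3 + 2 * c (k % 4) + σ * cχ (k % 4)) →
      Nat.gcd (4 ^ p - 1) (seqVal p u) ≤ (1 + 2 * p) * (1 + 6 * p) * (1 + 8 * p) := by
    intro c σ τ u hc h2 h3 hσ hτ hu0 huk
    have hcs : ∀ k, c ((2 + k) % 4) = -1 * c (k % 4) := by
      intro k
      have hk : k % 4 = 0 ∨ k % 4 = 1 ∨ k % 4 = 2 ∨ k % 4 = 3 := by omega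
      rw [Nat.add_mod]
      rcases hk with h | h | h | h <;> simp [h, h2, h3]
    have hcx : ∀ k, cχ ((1 + k) % 4) = -1 * cχ (k % 4) := by
      intro k
      have hk : k % 4 = 0 ∨ k % 4 = 1 ∨ k % 4 = 2 ∨ k % 4 = 3 := by omega
      rw [Nat.add_mod]
      rcases hk with h | h | h | h <;> simp [h, cχ]
    have hcx2 : ∀ k, cχ ((2 + k) % 4) = 1 * cχ (k % 4) := by
      intro k
      have hk : k % 4 = 0 ∨ k % 4 = 1 ∨ k % 4 = 2 ∨ k % 4 = 3 := by omega
      rw [Nat.add_mod]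
      rcases hk with h | h | h | h <;> simp [h, cχ]
    refine gcd_bound (by omega) (θ : ZMod p) hθ0 hgen (clsF p θ c) (clsF p θ cχ) (hF0 _) (hF0 _)
      (hF1 c hc) (hF1 cχ ?_) ?_ ?_ ?_ ?_ ?_ σ τ hσ hτ u ?_
    · intro k _; simp only [cχ]; split_ifs <;> norm_num
    · have := hFk cχ 0
      simpa [cχ] using this
    · intro t
      rw [hFs c (-1) 2 hcs]; ring
    · intro t
      have := hFs cχ (-1) 1 hcx t
      rw [pow_one] at this
      rw [this]; ring
    · intro t
      rw [← neg_one_mul t, hneg, hFs c (-1) _ (fun k => by rw [h24, hcs])]; ring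
    · intro t
      rw [← neg_one_mul t, hneg, hFs cχ 1 _ (fun k => by rw [h24, hcx2])]; ring
    · intro t
      by_cases ht : t = 0
      · simp [ht, hF0, hu0]
      · obtain ⟨k, rfl⟩ := hgen t ht
        rw [huk, hFk, hFk, if_neg ht]; ring
  have hcase : ∀ k : ℕ, k % 4 = 0 ∨ k % 4 = 1 ∨ k % 4 = 2 ∨ k % 4 = 3 := by intro k; omega
  refine ⟨floor_bound p _ (by omega) ?_, floor_bound p _ (by omega) ?_,
    floor_bound p _ (by omega) ?_⟩
  · refine key (fun k => if k = 0 ∨ k = 1 then 1 else -1) (-1) (-1) _ ?_ ?_ ?_ ?_ ?_ ?_ ?_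
    · intro k _; split_ifs <;> norm_num
    · simp
    · simp
    · simp
    · simp
    · simp [graySeq, gray, seqS1, seqS3, seqCompl, hz]
    · intro k
      simp only [graySeq, gray, seqS1, seqS3, seqCompl, Finset.mem_union, hm 0 k (by norm_num),
        hm 1 k (by norm_num), hm 2 k (by norm_num), hm 3 k (by norm_num), cχ]
      rcases hcase k with h | h | h | h <;> simp [h]
  · refine key (fun k => if k = 1 ∨ k = 2 then 1 else -1) 1 (-1) _ ?_ ?_ ?_ ?_ ?_ ?_ ?_
    · intro k _; split_ifs <;> norm_num
    · simp
    · simp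
    · simp
    · simp
    · simp [graySeq, gray, seqS3, seqS4, seqCompl, hz]
    · intro k
      simp only [graySeq, gray, seqS3, seqS4, seqCompl, Finset.mem_union, hm 0 k (by norm_num),
        hm 1 k (by norm_num), hm 2 k (by norm_num), hm 3 k (by norm_num), cχ]
      rcases hcase k with h | h | h | h <;> simp [h]
  · refine key (fun k => if k = 0 ∨ k = 1 then -1 else 1) 1 1 _ ?_ ?_ ?_ ?_ ?_ ?_ ?_
    · intro k _; split_ifs <;> norm_num
    · simp
    · simp
    · simp
    · simp
    · simp [graySeq, gray, seqS1, seqS3, seqCompl, hz]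
    · intro k
      simp only [graySeq, gray, seqS1, seqS3, seqCompl, Finset.mem_union, hm 0 k (by norm_num),
        hm 1 k (by norm_num), hm 2 k (by norm_num), hm 3 k (by norm_num), cχ]
      rcases hcase k with h | h | h | h <;> simp [h]
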